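/- The Graev free abelian topological group A_G(s) over the convergent sequence s is not a pre-Mackey group: there is no locally quasi-convex group topology μ on the underlying group ℤ^(ℕ) of A_G(s) such that μ is compatible with the topology τ of A_G(s) and every locally quasi-convex group topology ν on ℤ^(ℕ) compatible with τ satisfies ν ≤ μ. -/

import Mathlib

open Filter Topology

noncomputable section

/-- `𝕊₊ = {z ∈ 𝕊 : Re z ≥ 0}`. -/
def SPlus : Set Circle := {z : Circle | 0 ≤ (z : ℂ).re}

/-- A character of an abelian group `G` is a homomorphism `G → 𝕊`. -/
def IsChar {G : Type*} [AddCommGroup G] (χ : G → Circle) : Prop :=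
  ∀ x y : G, χ (x + y) = χ x * χ y

/-- Two topologies on an abelian group `G` are *compatible* if they have the same
continuous characters `G → 𝕊`. -/
def Compatible {G : Type*} [AddCommGroup G] (t₁ t₂ : TopologicalSpace G) : Prop :=
  ∀ χ : G → Circle, IsChar χ →
    (@Continuous G Circle t₁ _ χ ↔ @Continuous G Circle t₂ _ χ)

/-- A subset `A` of a topological abelian group is *quasi-convex* if for every `g ∉ A`
there is a continuous character `χ` with `χ(A) ⊆ 𝕊₊` and `χ(g) ∉ 𝕊₊`. -/
def IsQuasiConvex {G : Type*} [AddCommGroup G] (t : TopologicalSpace G) (A : Set G) : Prop :=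
  ∀ g : G, g ∉ A → ∃ χ : G → Circle, IsChar χ ∧ @Continuous G Circle t _ χ ∧
    (∀ a ∈ A, χ a ∈ SPlus) ∧ χ g ∉ SPlus

/-- A topological abelian group is *locally quasi-convex* if it has a neighborhood base
at `0` consisting of quasi-convex sets. -/
def LocallyQuasiConvex {G : Type*} [AddCommGroup G] (t : TopologicalSpace G) : Prop :=
  ∀ U ∈ @nhds G t 0, ∃ V ∈ @nhds G t 0, V ⊆ U ∧ IsQuasiConvex t V

/-- The convergent sequence `s = {0} ∪ {1/n : n ∈ ℕ}` as a subspace of `ℝ`. -/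
def sSet : Set ℝ := {x : ℝ | x = 0 ∨ ∃ n : ℕ, 0 < n ∧ x = 1 / n}

/-- The natural map `s → ℤ^(ℕ)`, sending `0 ↦ 0` and `1/n ↦ e_n = single n 1`. -/
def sMap (x : sSet) : ℕ →₀ ℤ :=
  if (x : ℝ) = 0 then 0 else Finsupp.single ⌈(1 : ℝ) / (x : ℝ)⌉₊ 1

/-- The topology of the Graev free abelian topological group `A_G(s)`, i.e. the finest
group topology on `ℤ^(ℕ)` making `sMap : s → ℤ^(ℕ)` continuous.  In Mathlib's lattice of
(group) topologies `t ≤ s` means `t` is *finer* than `s`, so the finest such group topology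
is the `sInf` of the collection of all group topologies making `sMap` continuous; this
`sInf` itself makes `sMap` continuous, since `Continuous` into `t` means
`coinduced sMap _ ≤ t.toTopologicalSpace`, a condition preserved by `sInf`. -/
def tauGT : AddGroupTopology (ℕ →₀ ℤ) :=
  sInf {t : AddGroupTopology (ℕ →₀ ℤ) | @Continuous _ _ _ t.toTopologicalSpace sMap}

/-- The topology `τ` of `A_G(s)` on `ℤ^(ℕ)`. -/
def tau : TopologicalSpace (ℕ →₀ ℤ) := tauGT.toTopologicalSpace

/-!
For `z ∈ 𝕊` of infinite order let `ν_z` be the join of the Bohr topology of `τ` with the topology of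
uniform convergence of the characters `x ↦ z ^ x k`. It is locally quasi-convex, and it is
compatible with `τ`: suppose `χ` is `ν_z`-continuous and `w` is a limit point of `χ (e_n)`. The
vectors `n • (e_{φ k} + ⋯ + e_{φ (k + r - 1)})` tend to `0` in the Bohr topology and have all their
coordinates in `{0, n}`; hence, once `z ^ n` is close enough to `1`, every power of `w ^ n` lies
in `𝕊₊`, so that `w ^ n = 1`. As the multiples of any `d ≠ 0` give a dense set of powers of `z`,
the exponents `n` with `z ^ n` close to `1` generate `ℤ`, whence `w = 1`.

A topology finer than both `ν_z` and `ν_{-z}` has a neighborhood of `0` on which `z ^ x k` and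
`(-z) ^ x k` all have positive real part, which forces every `x k` to be even. So it makes
`x ↦ (-1) ^ ∑ x k` continuous, a character that takes the value `-1` at every `e_n` and is therefore
not `τ`-continuous.
-/

section Circle

lemma continuous_re_coe_circle : Continuous fun z : Circle => (z : ℂ).re :=
  Complex.continuous_re.comp continuous_subtype_val

lemma isClosed_SPlus : IsClosed SPlus :=
  isClosed_le continuous_const continuous_re_coe_circle

lemma setOf_re_pos_mem_nhds_one : {z : Circle | 0 < (z : ℂ).re} ∈ 𝓝 1 :=
  (isOpen_lt continuous_const continuous_re_coe_circle).mem_nhds (by simp)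

lemma SPlus_mem_nhds_one : SPlus ∈ 𝓝 1 :=
  mem_of_superset setOf_re_pos_mem_nhds_one fun _ => le_of_lt (α := ℝ)

lemma re_sq_add_im_sq_circle (z : Circle) : (z : ℂ).re ^ 2 + (z : ℂ).im ^ 2 = 1 := by
  rw [sq, sq, ← Complex.normSq_apply, Circle.normSq_coe]

lemma eq_one_of_one_le_re {z : Circle} (hz : 1 ≤ (z : ℂ).re) : z = 1 := by
  have hnorm := re_sq_add_im_sq_circle z
  have hre : (z : ℂ).re = 1 := by nlinarith [sq_nonneg (z : ℂ).im]
  have him : (z : ℂ).im = 0 := by simpa [hre] using hnorm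
  exact Circle.ext (Complex.ext hre him)

lemma two_mul_one_sub_re_le {z : Circle} (hz : z ∈ SPlus) :
    2 * (1 - (z : ℂ).re) ≤ 1 - ((z ^ 2 : Circle) : ℂ).re := by
  have hnorm := re_sq_add_im_sq_circle z
  have hre : 0 ≤ (z : ℂ).re := hz
  have hle : (z : ℂ).re ≤ 1 := by nlinarith [sq_nonneg (z : ℂ).im]
  rw [sq, Circle.coe_mul, Complex.mul_re]
  nlinarith

lemma eq_one_of_forall_pow_mem_SPlus {z : Circle} (hz : ∀ j : ℕ, z ^ j ∈ SPlus) : z = 1 := by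
  have hdouble (k : ℕ) : 2 ^ k * (1 - (z : ℂ).re) ≤ 1 - ((z ^ 2 ^ k : Circle) : ℂ).re := by
    induction k with
    | zero => simp
    | succ k ih =>
      have hsq := two_mul_one_sub_re_le (hz (2 ^ k))
      rw [← pow_mul, ← pow_succ] at hsq
      rw [pow_succ]
      linarith
  refine eq_one_of_one_le_re (not_lt.1 fun hlt => ?_)
  obtain ⟨k, hk⟩ := pow_unbounded_of_one_lt (1 / (1 - (z : ℂ).re)) one_lt_two
  rw [div_lt_iff₀ (sub_pos.2 hlt)] at hk
  have hre : 0 ≤ ((z ^ 2 ^ k : Circle) : ℂ).re := hz _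
  linarith [hdouble k]

/-- The arc of those `z ∈ 𝕊` with `z, z², …, z ^ m ∈ 𝕊₊`. These arcs form a neighborhood basis
of `1`, and their preimages under continuous characters are quasi-convex. -/
def arc (m : ℕ) : Set Circle := {z | ∀ j ≤ m, z ^ j ∈ SPlus}

lemma arc_eq_iInter (m : ℕ) : arc m = ⋂ j ∈ Set.Iic m, (· ^ j) ⁻¹' SPlus := by
  ext z
  simp [arc]

lemma isClosed_arc (m : ℕ) : IsClosed (arc m) := by
  rw [arc_eq_iInter]
  exact isClosed_biInter fun j _ => isClosed_SPlus.preimage (continuous_pow j)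

lemma arc_mem_nhds_one (m : ℕ) : arc m ∈ 𝓝 1 := by
  rw [arc_eq_iInter, biInter_mem (Set.finite_Iic m)]
  exact fun j _ => (continuous_pow j).tendsto' 1 1 (one_pow j) SPlus_mem_nhds_one

lemma antitone_arc : Antitone arc :=
  fun _ _ hmn _ hz j hj => hz j (hj.trans hmn)

lemma hasBasis_nhds_one_arc : (𝓝 (1 : Circle)).HasBasis (fun _ => True) arc := by
  refine ⟨fun V => ⟨fun hV => ?_, fun ⟨m, _, hm⟩ => mem_of_superset (arc_mem_nhds_one m) hm⟩⟩
  obtain ⟨m, hm⟩ := exists_subset_nhds_of_isCompact antitone_arc.directed_ge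
    (fun m => (isClosed_arc m).isCompact) (U := V) fun z hz => by
      rwa [eq_one_of_forall_pow_mem_SPlus fun j => Set.mem_iInter.1 hz j j le_rfl]
  exact ⟨m, trivial, hm⟩

lemma isOfFinOrder_toCircle {T : ℝ} (hT : T ≠ 0) {a : AddCircle T} :
    IsOfFinOrder a.toCircle ↔ IsOfFinAddOrder a := by
  simp only [isOfFinOrder_iff_pow_eq_one, isOfFinAddOrder_iff_nsmul_eq_zero,
    ← AddCircle.toCircle_nsmul, ← AddCircle.toCircle_zero (T := T),
    (AddCircle.injective_toCircle hT).eq_iff]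

lemma denseRange_zpow_circle {z : Circle} (hz : ¬IsOfFinOrder z) :
    DenseRange (z ^ · : ℤ → Circle) := by
  obtain ⟨a, rfl⟩ := (AddCircle.homeomorphCircle one_ne_zero).surjective z
  rw [AddCircle.homeomorphCircle_apply] at hz ⊢
  have hdense : DenseRange (· • a : ℤ → AddCircle (1 : ℝ)) :=
    AddCircle.denseRange_zsmul_iff.2
      (addOrderOf_eq_zero ((isOfFinOrder_toCircle one_ne_zero).not.1 hz))
  have hsurj : Function.Surjective (AddCircle.toCircle (T := 1)) := fun w =>
    ((AddCircle.homeomorphCircle one_ne_zero).surjective w).imp fun b hb =>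
      (AddCircle.homeomorphCircle_apply one_ne_zero b).symm.trans hb
  simpa only [Function.comp_def, AddCircle.toCircle_zsmul] using
    hsurj.denseRange.comp hdense AddCircle.continuous_toCircle

lemma exists_not_isOfFinOrder_circle : ∃ z : Circle, ¬IsOfFinOrder z := by
  refine ⟨AddCircle.toCircle ((√2 : ℝ) : AddCircle (1 : ℝ)),
    (isOfFinOrder_toCircle one_ne_zero).not.2 ?_⟩
  rw [← addOrderOf_eq_zero_iff, ← AddCircle.denseRange_zsmul_iff,
    AddCircle.denseRange_zsmul_coe_iff, div_one]
  exact irrational_sqrt_two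

lemma isOfFinOrder_of_zpow {M : Type*} [DivisionMonoid M] {x : M} {d : ℤ} (hd : d ≠ 0)
    (h : IsOfFinOrder (x ^ d)) : IsOfFinOrder x := by
  obtain ⟨n, hn, hxn⟩ := isOfFinOrder_iff_zpow_eq_one.1 h
  exact isOfFinOrder_iff_zpow_eq_one.2 ⟨d * n, mul_ne_zero hd hn, by rw [zpow_mul, hxn]⟩

lemma not_isOfFinOrder_neg {R : Type*} [Monoid R] [HasDistribNeg R] {x : R} (hx : ¬IsOfFinOrder x) :
    ¬IsOfFinOrder (-x) := by
  have hsq : ¬IsOfFinOrder (x ^ 2) := by simpa [isOfFinOrder_pow] using hx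
  rw [← neg_sq] at hsq
  exact mt IsOfFinOrder.pow hsq

lemma exists_zpow_one_add_mul_mem {z : Circle} (hz : ¬IsOfFinOrder z) {d : ℤ} (hd : d ≠ 0)
    {V : Set Circle} (hV : V ∈ 𝓝 1) : ∃ j : ℤ, z ^ (1 + d * j) ∈ V := by
  have hzd : ¬IsOfFinOrder (z ^ d) := mt (isOfFinOrder_of_zpow hd) hz
  have hmul : (z * ·) ⁻¹' V ∈ 𝓝 z⁻¹ :=
    (continuous_const_mul z).tendsto' _ _ (mul_inv_cancel z) hV
  obtain ⟨_, hj, j, rfl⟩ := mem_closure_iff_nhds.1 (denseRange_zpow_circle hzd z⁻¹) _ hmul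
  exact ⟨j, by simpa [zpow_add, zpow_mul] using hj⟩

lemma eq_one_of_forall_zpow_mem_imp {M : Type*} [Group M] {z : Circle} (hz : ¬IsOfFinOrder z)
    {V : Set Circle} (hV : V ∈ 𝓝 1) {w : M} (hw : ∀ n : ℤ, z ^ n ∈ V → w ^ n = 1) : w = 1 := by
  obtain ⟨i, hi⟩ := exists_zpow_one_add_mul_mem hz two_ne_zero hV
  obtain ⟨j, hj⟩ := exists_zpow_one_add_mul_mem hz (show 1 + 2 * i ≠ 0 by lia) hV
  simpa [zpow_add, zpow_mul _ (1 + 2 * i), hw _ hi] using hw _ hj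

end Circle

section GroupTopologies

open scoped UniformConvergence

variable {G : Type*} [AddCommGroup G]

lemma addGroupTopology_le_iff_nhds_zero_le {t t' : AddGroupTopology G} :
    t ≤ t' ↔ @nhds G t.toTopologicalSpace 0 ≤ @nhds G t'.toTopologicalSpace 0 := by
  refine ⟨fun h => nhds_mono h, fun h => le_of_nhds_le_nhds fun x => ?_⟩
  have := t.toIsTopologicalAddGroup
  have := t'.toIsTopologicalAddGroup
  rw [← @map_add_left_nhds_zero G t.toTopologicalSpace,
    ← @map_add_left_nhds_zero G t'.toTopologicalSpace]
  exact map_mono h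

lemma continuous_addChar_iff {t : AddGroupTopology G} {χ : AddChar G Circle} :
    Continuous[t.toTopologicalSpace, _] χ ↔ Tendsto χ (@nhds G t.toTopologicalSpace 0) (𝓝 1) := by
  let := t.toTopologicalSpace
  have := t.toIsTopologicalAddGroup
  refine ⟨fun h => h.tendsto' 0 1 χ.map_zero_eq_one, fun h => ?_⟩
  rw [← χ.map_zero_eq_one] at h
  exact continuous_of_continuousAt_zero χ.toAddMonoidHom h

lemma compatible_iff_addChar {t t' : TopologicalSpace G} :
    Compatible t t' ↔
      ∀ χ : AddChar G Circle, Continuous[t, _] χ ↔ Continuous[t', _] χ := by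
  refine ⟨fun h χ => h χ χ.map_add_eq_mul, fun h χ hχ => ?_⟩
  have hχ0 : χ 0 = 1 := by simpa using hχ 0 0
  exact h ⟨χ, hχ0, hχ⟩

lemma isQuasiConvex_preimage_SPlus {t : TopologicalSpace G} {χ : AddChar G Circle}
    (hχ : Continuous[t, _] χ) : IsQuasiConvex t (χ ⁻¹' SPlus) :=
  fun _ hg => ⟨χ, χ.map_add_eq_mul, hχ, fun _ ha => ha, hg⟩

lemma IsQuasiConvex.iInter {ι : Sort*} {t : TopologicalSpace G} {A : ι → Set G}
    (hA : ∀ i, IsQuasiConvex t (A i)) : IsQuasiConvex t (⋂ i, A i) := by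
  intro g hg
  obtain ⟨i, hi⟩ : ∃ i, g ∉ A i := by simpa using hg
  obtain ⟨χ, hχ, hcont, hmem, hχg⟩ := hA i g hi
  exact ⟨χ, hχ, hcont, fun a ha => hmem a (Set.mem_iInter.1 ha i), hχg⟩

lemma IsQuasiConvex.of_topology_le {t t' : TopologicalSpace G} {A : Set G} (h : t' ≤ t)
    (hA : IsQuasiConvex t A) : IsQuasiConvex t' A := fun g hg =>
  let ⟨χ, hχ, hcont, hχA⟩ := hA g hg
  ⟨χ, hχ, continuous_le_dom h hcont, hχA⟩

lemma isQuasiConvex_preimage_arc {t : TopologicalSpace G} {χ : AddChar G Circle}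
    (hχ : Continuous[t, _] χ) (m : ℕ) : IsQuasiConvex t (χ ⁻¹' arc m) := by
  rw [arc_eq_iInter, Set.preimage_iInter₂]
  refine .iInter fun j => .iInter fun _ => isQuasiConvex_preimage_SPlus (χ := χ ^ j) ?_
  exact (continuous_pow j).comp hχ

lemma locallyQuasiConvex_iInf {ι : Type*} {t : ι → TopologicalSpace G}
    (ht : ∀ i, LocallyQuasiConvex (t i)) : LocallyQuasiConvex (⨅ i, t i) := by
  intro U hU
  rw [nhds_iInf, mem_iInf] at hU
  obtain ⟨I, hI, V, hV, rfl⟩ := hU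
  choose W hW hWV hWqc using fun i : I => ht i (V i) (hV i)
  have := hI.to_subtype
  refine ⟨⋂ i, W i, ?_, Set.iInter_mono hWV,
    .iInter fun i => (hWqc i).of_topology_le (iInf_le t i)⟩
  rw [nhds_iInf, iInter_mem]
  exact fun i => mem_iInf_of_mem i.1 (hW i)

lemma locallyQuasiConvex_inf {t t' : TopologicalSpace G} (ht : LocallyQuasiConvex t)
    (ht' : LocallyQuasiConvex t') : LocallyQuasiConvex (t ⊓ t') := by
  rw [inf_eq_iInf]
  exact locallyQuasiConvex_iInf (Bool.forall_bool.2 ⟨ht', ht⟩)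

/-- The evaluation of the elements of `G` at a set `S` of characters, with values in the group of
functions `S → 𝕊` under uniform convergence; `uniformTopology S` is induced by it. -/
def evalUniform (S : Set (AddChar G Circle)) : G →+ Additive (S →ᵤ Circle) where
  toFun x := .ofMul (UniformFun.ofFun fun χ => χ.1 x)
  map_zero' := congrArg UniformFun.ofFun (funext fun χ => χ.1.map_zero_eq_one)
  map_add' x y := congrArg UniformFun.ofFun (funext fun χ => χ.1.map_add_eq_mul x y)

/-- The group topology on `G` of uniform convergence on a set `S` of characters: a net tends to `0`
when the values on it of the `χ ∈ S` tend to `1` uniformly in `χ`. -/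
def uniformTopology (S : Set (AddChar G Circle)) : AddGroupTopology G where
  toTopologicalSpace := .induced (evalUniform S) inferInstance
  toIsTopologicalAddGroup := topologicalAddGroup_induced (evalUniform S)

lemma hasBasis_nhds_zero_uniformTopology {ι : Type*} {p : ι → Prop} {b : ι → Set Circle}
    (hb : (𝓝 1).HasBasis p b) (S : Set (AddChar G Circle)) :
    (@nhds G (uniformTopology S).toTopologicalSpace 0).HasBasis p
      fun i => {x | ∀ χ ∈ S, χ x ∈ b i} := by
  have hcomap := (UniformFun.hasBasis_nhds_one_of_basis (α := S) hb).comap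
    (fun x => UniformFun.ofFun fun χ : S => χ.1 x)
  rw [uniformTopology, nhds_induced, map_zero]
  simp only [Set.preimage_ofPred_eq, UniformFun.toFun_ofFun, Subtype.forall] at hcomap
  exact hcomap

lemma continuous_uniformTopology {S : Set (AddChar G Circle)} {χ : AddChar G Circle} (hχ : χ ∈ S) :
    Continuous[(uniformTopology S).toTopologicalSpace, _] χ :=
  continuous_addChar_iff.2 <|
    ((hasBasis_nhds_zero_uniformTopology (basis_sets _) S).tendsto_iff (basis_sets _)).2
      fun V hV => ⟨V, hV, fun _ hx => hx χ hχ⟩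

lemma le_uniformTopology_singleton_iff {t : AddGroupTopology G} {χ : AddChar G Circle} :
    t ≤ uniformTopology {χ} ↔ Continuous[t.toTopologicalSpace, _] χ := by
  rw [addGroupTopology_le_iff_nhds_zero_le, continuous_addChar_iff,
    (hasBasis_nhds_zero_uniformTopology (basis_sets _) {χ}).ge_iff]
  simp [Tendsto, le_def, Set.preimage]

lemma locallyQuasiConvex_uniformTopology (S : Set (AddChar G Circle)) :
    LocallyQuasiConvex (uniformTopology S).toTopologicalSpace := by
  have hbasis := hasBasis_nhds_zero_uniformTopology hasBasis_nhds_one_arc S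
  intro U hU
  obtain ⟨m, -, hmU⟩ := hbasis.mem_iff.1 hU
  refine ⟨_, hbasis.mem_of_mem trivial, hmU, ?_⟩
  have hpolar : {x | ∀ χ ∈ S, χ x ∈ arc m} = ⋂ χ ∈ S, χ ⁻¹' arc m := by
    ext x
    simp
  rw [hpolar]
  exact .iInter fun χ => .iInter fun hχ =>
    isQuasiConvex_preimage_arc (continuous_uniformTopology hχ) m

/-- The Bohr topology of `(G, t)`: the coarsest group topology on `G` for which the continuous
characters of `(G, t)` are continuous. -/
def bohrTopology (t : TopologicalSpace G) : AddGroupTopology G :=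
  ⨅ χ : {χ : AddChar G Circle // Continuous[t, _] χ}, uniformTopology {χ.1}

lemma locallyQuasiConvex_bohrTopology (t : TopologicalSpace G) :
    LocallyQuasiConvex (bohrTopology t).toTopologicalSpace := by
  rw [bohrTopology, AddGroupTopology.toTopologicalSpace_iInf]
  exact locallyQuasiConvex_iInf fun χ => locallyQuasiConvex_uniformTopology {χ.1}

lemma le_bohrTopology (t : AddGroupTopology G) : t ≤ bohrTopology t.toTopologicalSpace :=
  le_iInf fun χ => le_uniformTopology_singleton_iff.2 χ.2

lemma continuous_bohrTopology {t : TopologicalSpace G} {χ : AddChar G Circle}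
    (hχ : Continuous[t, _] χ) : Continuous[(bohrTopology t).toTopologicalSpace, _] χ :=
  le_uniformTopology_singleton_iff.1 (iInf_le_of_le ⟨χ, hχ⟩ le_rfl)

end GroupTopologies

section CoordinateCharacters

variable {ι : Type*}

/-- The character `x ↦ z ^ x k` of `ℤ^(ι)`, from which `ν_z` is built. -/
def coordChar (z : Circle) (k : ι) : AddChar (ι →₀ ℤ) Circle where
  toFun x := z ^ x k
  map_zero_eq_one' := zpow_zero z
  map_add_eq_mul' x y := zpow_add z (x k) (y k)

lemma coordChar_apply (z : Circle) (k : ι) (x : ι →₀ ℤ) : coordChar z k x = z ^ x k := rfl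

/-- The character `x ↦ (-1) ^ ∑ x k` of `ℤ^(ι)`, the obstruction to a common compatible refinement
of `ν_z` and `ν_{-z}`. -/
def parityChar : AddChar (ι →₀ ℤ) Circle where
  toFun x := (-1) ^ x.degree
  map_zero_eq_one' := by simp
  map_add_eq_mul' x y := by rw [map_add, zpow_add]

lemma parityChar_single (k : ι) : parityChar (Finsupp.single k 1) = -1 := by
  simp [parityChar]

lemma parityChar_eq_one {x : ι →₀ ℤ} (hx : ∀ k, Even (x k)) : parityChar x = 1 :=
  Even.neg_one_zpow (Finset.even_sum _ fun k _ => hx k)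

lemma even_of_re_zpow_pos {z : Circle} {n : ℤ} (h : 0 < ((z ^ n : Circle) : ℂ).re)
    (hneg : 0 < (((-z) ^ n : Circle) : ℂ).re) : Even n := by
  by_contra hodd
  rw [(Int.not_even_iff_odd.1 hodd).neg_zpow, Circle.coe_neg, Complex.neg_re] at hneg
  linarith

lemma continuous_parityChar {μ : AddGroupTopology (ι →₀ ℤ)} {z : Circle}
    (h : μ ≤ uniformTopology (Set.range (coordChar z)))
    (hneg : μ ≤ uniformTopology (Set.range (coordChar (-z)))) :
    Continuous[μ.toTopologicalSpace, _] (parityChar (ι := ι)) := by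
  have hpos {w : Circle} (hw : μ ≤ uniformTopology (Set.range (coordChar w))) :
      ∀ᶠ x in @nhds _ μ.toTopologicalSpace 0, ∀ k, 0 < ((w ^ x k : Circle) : ℂ).re := by
    have hmem := addGroupTopology_le_iff_nhds_zero_le.1 hw
      ((hasBasis_nhds_zero_uniformTopology (basis_sets _) _).mem_of_mem setOf_re_pos_mem_nhds_one)
    filter_upwards [hmem] with x hx k
    exact hx _ ⟨k, rfl⟩
  refine continuous_addChar_iff.2 (tendsto_nhds_of_eventually_eq ?_)
  filter_upwards [hpos h, hpos hneg] with x hx hxneg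
  exact parityChar_eq_one fun k => even_of_re_zpow_pos (hx k) (hxneg k)

/-- The sum of the `r` basis vectors of `ℤ^(ι)` with indices `φ k, …, φ (k + r - 1)`. Its multiples
by `n` test continuity for `ν_z`, as their coordinates stay in `{0, n}` while `r` varies. -/
def blockSum (φ : ℕ → ι) (r k : ℕ) : ι →₀ ℤ :=
  ∑ i ∈ Finset.range r, Finsupp.single (φ (i + k)) 1

lemma blockSum_apply_eq_zero_or_one {φ : ℕ → ι} (hφ : Function.Injective φ) (r k : ℕ) (m : ι) :
    blockSum φ r k m = 0 ∨ blockSum φ r k m = 1 := by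
  classical
  rw [blockSum, Finsupp.finsetSum_apply]
  by_cases hm : ∃ i ∈ Finset.range r, φ (i + k) = m
  · obtain ⟨i, hi, rfl⟩ := hm
    right
    simpa [Finsupp.single_apply, hφ.eq_iff] using hi
  · push Not at hm
    exact Or.inl (Finset.sum_eq_zero fun i hi => Finsupp.single_eq_of_ne (hm i hi).symm)

lemma tendsto_map_zsmul_blockSum {M : Type*} [AddCommGroup M] [TopologicalSpace M]
    [IsTopologicalAddGroup M] (f : (ι →₀ ℤ) →+ M) {φ : ℕ → ι} {a : M}
    (h : Tendsto (fun k => f (Finsupp.single (φ k) 1)) atTop (𝓝 a)) (n : ℤ) (r : ℕ) :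
    Tendsto (fun k => f (n • blockSum φ r k)) atTop (𝓝 (r • n • a)) := by
  have hsum := tendsto_finsetSum (Finset.range r) fun i _ =>
    ((h.comp (tendsto_add_atTop_nat i)).const_smul n)
  simpa only [blockSum, map_zsmul, map_sum, Finset.smul_sum, Function.comp_apply, add_comm,
    Finset.sum_const, Finset.card_range] using hsum

lemma eq_one_of_tendsto_single {t : AddGroupTopology (ι →₀ ℤ)} {z : Circle}
    (hz : ¬IsOfFinOrder z) {χ : AddChar (ι →₀ ℤ) Circle}
    (hχ : Continuous[(t ⊓ uniformTopology (Set.range (coordChar z))).toTopologicalSpace, _] χ)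
    {φ : ℕ → ι} (hφ : Function.Injective φ)
    (ht : Tendsto (fun k => Finsupp.single (φ k) (1 : ℤ)) atTop (@nhds _ t.toTopologicalSpace 0))
    {w : Circle} (hw : Tendsto (fun k => χ (Finsupp.single (φ k) 1)) atTop (𝓝 w)) : w = 1 := by
  have hmem := continuous_addChar_iff.1 hχ SPlus_mem_nhds_one
  rw [AddGroupTopology.toTopologicalSpace_inf, nhds_inf, mem_map, mem_inf_iff_superset] at hmem
  obtain ⟨A, hA, B, hB, hAB⟩ := hmem
  obtain ⟨V, hV, hVB⟩ := (hasBasis_nhds_zero_uniformTopology (basis_sets _) _).mem_iff.1 hB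
  refine eq_one_of_forall_zpow_mem_imp hz hV fun n hn => eq_one_of_forall_pow_mem_SPlus fun r => ?_
  have hblock : ∀ᶠ k in atTop, n • blockSum φ r k ∈ A := by
    let := t.toTopologicalSpace
    have := t.toIsTopologicalAddGroup
    have hlim := tendsto_map_zsmul_blockSum (.id (ι →₀ ℤ)) ht n r
    rw [smul_zero, smul_zero] at hlim
    exact hlim.eventually_mem hA
  have hcoord (k : ℕ) : n • blockSum φ r k ∈ B := by
    refine hVB (Set.forall_mem_range.2 fun m => ?_)
    rcases blockSum_apply_eq_zero_or_one hφ r k m with hm | hm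
    · simpa [coordChar_apply, hm] using mem_of_mem_nhds hV
    · simpa [coordChar_apply, hm] using hn
  exact isClosed_SPlus.mem_of_tendsto (tendsto_map_zsmul_blockSum χ.toAddMonoidHom hw n r)
    (hblock.mono fun k hk => hAB ⟨hk, hcoord k⟩)

lemma tendsto_single_of_continuous_inf_uniformTopology {t : AddGroupTopology (ℕ →₀ ℤ)}
    (ht : Tendsto (fun n => Finsupp.single n (1 : ℤ)) atTop (@nhds _ t.toTopologicalSpace 0))
    {z : Circle} (hz : ¬IsOfFinOrder z) {χ : AddChar (ℕ →₀ ℤ) Circle}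
    (hχ : Continuous[(t ⊓ uniformTopology (Set.range (coordChar z))).toTopologicalSpace, _] χ) :
    Tendsto (fun n => χ (Finsupp.single n 1)) atTop (𝓝 1) := by
  refine tendsto_nhds_of_unique_mapClusterPt fun w hw => ?_
  obtain ⟨φ, hφ, hφw⟩ := hw.tendsto_subseq
  exact eq_one_of_tendsto_single hz hχ hφ.injective (ht.comp hφ.tendsto_atTop) hφw

end CoordinateCharacters

section ConvergentSequence

lemma sMap_of_eq_zero {x : sSet} (hx : (x : ℝ) = 0) : sMap x = 0 :=
  if_pos hx

lemma sMap_of_eq_one_div {x : sSet} {n : ℕ} (hn : 0 < n) (hx : (x : ℝ) = 1 / n) :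
    sMap x = Finsupp.single n 1 := by
  rw [sMap, hx, if_neg (by positivity), one_div_one_div, Nat.ceil_natCast]

lemma eventually_eq_of_coe_sSet_ne_zero {x : sSet} (hx : (x : ℝ) ≠ 0) : ∀ᶠ y in 𝓝 x, y = x := by
  obtain ⟨n, -, hxn⟩ := x.2.resolve_left hx
  have hval : Tendsto (fun y : sSet => (y : ℝ)) (𝓝 x) (𝓝 x) := continuous_subtype_val.tendsto x
  filter_upwards [hval.eventually_ne hx,
    (hval.inv₀ hx).eventually (Metric.ball_mem_nhds _ one_pos)] with y hy0 hydist
  obtain ⟨m, -, hym⟩ := y.2.resolve_left hy0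
  rw [hxn, hym, one_div, one_div, inv_inv, inv_inv, Nat.dist_cast_real] at hydist
  have hmn : m = n := by
    by_contra hne
    exact (Nat.pairwise_one_le_dist hne).not_gt hydist
  exact Subtype.ext (by rw [hym, hxn, hmn])

lemma continuous_sMap_iff (t : TopologicalSpace (ℕ →₀ ℤ)) :
    Continuous[_, t] sMap ↔ Tendsto (fun n : ℕ => Finsupp.single n (1 : ℤ)) atTop (𝓝 0) := by
  let origin : sSet := ⟨0, Or.inl rfl⟩
  have horigin : sMap origin = 0 := sMap_of_eq_zero rfl
  constructor
  · intro h
    let inv (n : ℕ) : sSet := ⟨1 / (n + 1 : ℕ), Or.inr ⟨n + 1, n.succ_pos, rfl⟩⟩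
    have hinv : Tendsto inv atTop (𝓝 origin) := by
      rw [tendsto_subtype_rng]
      simpa [inv] using tendsto_one_div_add_atTop_nhds_zero_nat (𝕜 := ℝ)
    rw [← tendsto_add_atTop_iff_nat 1]
    exact ((h.tendsto' origin 0 horigin).comp hinv).congr fun n =>
      sMap_of_eq_one_div n.succ_pos rfl
  · intro h
    refine continuous_iff_continuousAt.2 fun x => ?_
    by_cases hx : (x : ℝ) = 0
    · obtain rfl : x = origin := Subtype.ext hx
      intro V hV
      rw [horigin] at hV
      obtain ⟨N, hN⟩ := eventually_atTop.1 (h.eventually_mem hV)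
      have hnear : ∀ᶠ y : sSet in 𝓝 origin, (y : ℝ) < 1 / (N + 1) :=
        (continuous_subtype_val.tendsto origin).eventually_lt_const (by positivity)
      refine mem_map.2 ?_
      filter_upwards [hnear] with y hy
      rcases y.2 with hy0 | ⟨n, hn, hyn⟩
      · rw [Set.mem_preimage, sMap_of_eq_zero hy0]
        exact mem_of_mem_nhds hV
      · rw [Set.mem_preimage, sMap_of_eq_one_div hn hyn]
        rw [hyn, one_div_lt_one_div (by positivity) (by positivity)] at hy
        exact hN n (by exact_mod_cast (lt_add_one (N : ℝ)).le.trans hy.le)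
    · exact tendsto_nhds_of_eventually_eq
        ((eventually_eq_of_coe_sSet_ne_zero hx).mono fun y hy => by rw [hy])

lemma tauGT_le_iff {t : AddGroupTopology (ℕ →₀ ℤ)} :
    tauGT ≤ t ↔ Tendsto (fun n : ℕ => Finsupp.single n (1 : ℤ)) atTop
      (@nhds _ t.toTopologicalSpace 0) := by
  rw [← continuous_sMap_iff]
  refine ⟨fun h => continuous_le_rng h ?_, fun h => sInf_le h⟩
  rw [tauGT, AddGroupTopology.toTopologicalSpace_sInf, continuous_sInf_rng]
  rintro _ ⟨t', ht', rfl⟩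
  exact ht'

lemma continuous_tau_iff {χ : AddChar (ℕ →₀ ℤ) Circle} :
    Continuous[tau, _] χ ↔ Tendsto (fun n => χ (Finsupp.single n 1)) atTop (𝓝 1) := by
  rw [tau, ← le_uniformTopology_singleton_iff, tauGT_le_iff,
    (hasBasis_nhds_zero_uniformTopology (basis_sets _) {χ}).tendsto_right_iff,
    (basis_sets _).tendsto_right_iff]
  simp

/-- The join `ν_z` of the Bohr topology of `τ` with the topology of uniform convergence of the
characters `x ↦ z ^ x k`. It is compatible with `τ` when `z` has infinite order. -/
def nu (z : Circle) : AddGroupTopology (ℕ →₀ ℤ) :=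
  bohrTopology tau ⊓ uniformTopology (Set.range (coordChar z))

lemma locallyQuasiConvex_nu (z : Circle) : LocallyQuasiConvex (nu z).toTopologicalSpace :=
  locallyQuasiConvex_inf (locallyQuasiConvex_bohrTopology tau)
    (locallyQuasiConvex_uniformTopology _)

lemma compatible_nu {z : Circle} (hz : ¬IsOfFinOrder z) :
    Compatible (nu z).toTopologicalSpace tau := by
  refine compatible_iff_addChar.2 fun χ => ⟨fun hχ => ?_, fun hχ => ?_⟩
  · exact continuous_tau_iff.2 (tendsto_single_of_continuous_inf_uniformTopology
      (tauGT_le_iff.1 (le_bohrTopology tauGT)) hz hχ)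
  · exact continuous_le_dom inf_le_left (continuous_bohrTopology hχ)

lemma not_compatible_of_le_nu {z : Circle} {μ : AddGroupTopology (ℕ →₀ ℤ)} (h : μ ≤ nu z)
    (hneg : μ ≤ nu (-z)) : ¬Compatible μ.toTopologicalSpace tau := by
  intro hμ
  have hparity : Continuous[tau, _] (parityChar (ι := ℕ)) :=
    (compatible_iff_addChar.1 hμ _).1
      (continuous_parityChar (h.trans inf_le_right) (hneg.trans inf_le_right))
  have hlim := continuous_tau_iff.1 hparity
  simp only [parityChar_single] at hlim
  have hone : (-1 : Circle) = 1 := tendsto_nhds_unique tendsto_const_nhds hlim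
  norm_num [Circle.ext_iff] at hone

end ConvergentSequence

theorem A_G_s_not_preMackey_general :
    ∃ ν₁ ν₂ : AddGroupTopology (ℕ →₀ ℤ),
      (LocallyQuasiConvex ν₁.toTopologicalSpace ∧ Compatible ν₁.toTopologicalSpace tau) ∧
      (LocallyQuasiConvex ν₂.toTopologicalSpace ∧ Compatible ν₂.toTopologicalSpace tau) ∧
      ∀ μ : AddGroupTopology (ℕ →₀ ℤ), μ ≤ ν₁ → μ ≤ ν₂ → ¬Compatible μ.toTopologicalSpace tau := by
  obtain ⟨z, hz⟩ := exists_not_isOfFinOrder_circle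
  exact ⟨nu z, nu (-z), ⟨locallyQuasiConvex_nu z, compatible_nu hz⟩,
    ⟨locallyQuasiConvex_nu (-z), compatible_nu (not_isOfFinOrder_neg hz)⟩,
    fun _ => not_compatible_of_le_nu⟩

/-- The group `A_G(s)` is not a pre-Mackey group: there is no locally quasi-convex group
topology `μ` on `ℤ^(ℕ)` compatible with `τ` such that every locally quasi-convex group
topology `ν` compatible with `τ` is coarser than `μ` (i.e. every `ν`-open set is `μ`-open). -/
theorem A_G_s_not_preMackey :
    ¬ ∃ μ : AddGroupTopology (ℕ →₀ ℤ),
        LocallyQuasiConvex μ.toTopologicalSpace ∧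
        Compatible μ.toTopologicalSpace tau ∧
        ∀ ν : AddGroupTopology (ℕ →₀ ℤ),
          LocallyQuasiConvex ν.toTopologicalSpace → Compatible ν.toTopologicalSpace tau →
          ∀ U : Set (ℕ →₀ ℤ), IsOpen[ν.toTopologicalSpace] U → IsOpen[μ.toTopologicalSpace] U := by
  rintro ⟨μ, -, hμ, hmax⟩
  obtain ⟨ν₁, ν₂, ⟨hlqc₁, hcomp₁⟩, ⟨hlqc₂, hcomp₂⟩, hno⟩ := A_G_s_not_preMackey_general
  exact hno μ (hmax ν₁ hlqc₁ hcomp₁) (hmax ν₂ hlqc₂ hcomp₂) hμ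

end
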